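/- Right composition for E-separation: for every directed graph G = (V, E_d) and all subsets A, B, C ⊆ V, (A, B, C) ∈ I_E^G if and only if (A, {b}, C) ∈ I_E^G for every b ∈ B. -/

import Mathlib

namespace ESepPaper

/-- A directed mixed graph: directed edges and bidirected edges over a node type `V`.
A directed graph (DG) is a DMG with `Ebi = ∅`. -/
structure DMG (V : Type) where
  Ed : Set (V × V)
  Ebi : Set (Sym2 V)

variable {V : Type}

/-- `G.ancestor u v` : there is a directed path `u → … → v` (possibly trivial). -/
def DMG.ancestor (G : DMG V) : V → V → Prop :=
  Relation.ReflTransGen (fun u v => (u, v) ∈ G.Ed)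

/-- Ancestors of a set `C`. -/
def DMG.anc (G : DMG V) (C : Set V) : Set V := {u | ∃ v ∈ C, G.ancestor u v}

/-- Strongly connected component of `v`. -/
def DMG.scc (G : DMG V) (v : V) : Set V := {w | G.ancestor w v ∧ G.ancestor v w}

/-- Parents of a set of nodes. -/
def DMG.pa (G : DMG V) (S : Set V) : Set V := {w | ∃ v ∈ S, (w, v) ∈ G.Ed}

/-- Kind of a traversed edge on a walk: forward directed, backward directed, or bidirected. -/
inductive LinkType | fwd | bwd | bi
deriving DecidableEq

/-- Validity of a link of kind `t` between consecutive walk nodes `u` and `v`. -/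
def DMG.linkOK (G : DMG V) (u v : V) : LinkType → Prop
  | .fwd => (u, v) ∈ G.Ed
  | .bwd => (v, u) ∈ G.Ed
  | .bi => s(u, v) ∈ G.Ebi

/-- Arrowhead at the second (right) endpoint of the link. -/
def LinkType.headR : LinkType → Prop
  | .fwd => True
  | .bwd => False
  | .bi => True

/-- Arrowhead at the first (left) endpoint of the link. -/
def LinkType.headL : LinkType → Prop
  | .fwd => False
  | .bwd => True
  | .bi => True

/-- Tail at the second (right) endpoint. -/
def LinkType.tailR (t : LinkType) : Prop := t = .bwd

/-- Tail at the first (left) endpoint. -/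
def LinkType.tailL (t : LinkType) : Prop := t = .fwd

/-- Walks in a DMG. -/
inductive DMG.Walk (G : DMG V) : V → V → Type
  | nil (v : V) : DMG.Walk G v v
  | cons {u v w : V} (t : LinkType) (h : G.linkOK u v t) (p : DMG.Walk G v w) : DMG.Walk G u w

/-- An interior node on a walk, whose incoming link is `t1` and outgoing link is `t2`,
is a collider iff both links have an arrowhead at it. -/
def colliderAt (t1 t2 : LinkType) : Prop := t1.headR ∧ t2.headL

/-- An interior non-collider `v` between neighbours `u` (incoming link `t1`) and `w`
(outgoing link `t2`) is unblockable: on every side where the link has a tail at `v`, the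
corresponding neighbour lies in `scc_G(v)` (left-chain/right-chain/fork cases). -/
def unblockableAt (G : DMG V) (u v w : V) (t1 t2 : LinkType) : Prop :=
  (t1.tailR → u ∈ G.scc v) ∧ (t2.tailL → w ∈ G.scc v)

namespace DMG.Walk

variable {G : DMG V}

/-- First node of a walk. -/
def first {a b : V} (_ : G.Walk a b) : V := a

def length : {a b : V} → G.Walk a b → ℕ
  | _, _, .nil _ => 0
  | _, _, .cons _ _ p => p.length + 1

def support : {a b : V} → G.Walk a b → List V
  | a, _, .nil _ => [a]
  | a, _, .cons _ _ p => a :: p.support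

/-- Auxiliary: σ-openness of the remainder of a walk, where `u` is the previous node and
`t1` the link from `u` into the current first node. -/
def sigmaOpenAux (C : Set V) : (u : V) → LinkType → {b c : V} → G.Walk b c → Prop
  | _, _, _, _, .nil _ => True
  | u, t1, v, _, .cons t2 _ q =>
      ((colliderAt t1 t2 → v ∈ G.anc C) ∧
       (¬ colliderAt t1 t2 → ¬ unblockableAt G u v q.first t1 t2 → v ∉ C)) ∧
      sigmaOpenAux C v t2 q

/-- The walk is σ-open given `C`: every collider on it is an ancestor of a node of `C`, and
no blockable non-collider on it lies in `C`. -/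
def sigmaOpen (C : Set V) : {a b : V} → G.Walk a b → Prop
  | _, _, .nil _ => True
  | a, _, .cons t _ q => sigmaOpenAux C a t q

/-- All links are forward directed. -/
def IsDirected : {a b : V} → G.Walk a b → Prop
  | _, _, .nil _ => True
  | _, _, .cons t _ p => t = .fwd ∧ p.IsDirected

/-- Interior nodes of the walk (all nodes except the two endpoints). -/
def interior {a b : V} (p : G.Walk a b) : List V := p.support.tail.dropLast

/-- Arrowhead at the first endpoint. -/
def headAtStart : {a b : V} → G.Walk a b → Prop
  | _, _, .nil _ => False
  | _, _, .cons t _ _ => t.headL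

def headAtEndAux : LinkType → {a b : V} → G.Walk a b → Prop
  | t, _, _, .nil _ => t.headR
  | _, _, _, .cons t _ q => headAtEndAux t q

/-- Arrowhead at the last endpoint. -/
def headAtEnd : {a b : V} → G.Walk a b → Prop
  | _, _, .nil _ => False
  | _, _, .cons t _ q => headAtEndAux t q

def noCollidersAux : LinkType → {a b : V} → G.Walk a b → Prop
  | _, _, _, .nil _ => True
  | t1, _, _, .cons t2 _ q => ¬ colliderAt t1 t2 ∧ noCollidersAux t2 q

/-- There is no collider on the walk. -/
def NoColliders : {a b : V} → G.Walk a b → Prop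
  | _, _, .nil _ => True
  | _, _, .cons t _ q => noCollidersAux t q

def collidersInAux (S : Set V) : LinkType → {a b : V} → G.Walk a b → Prop
  | _, _, _, .nil _ => True
  | t1, v, _, .cons t2 _ q => (colliderAt t1 t2 → v ∈ S) ∧ collidersInAux S t2 q

/-- Every collider on the walk lies in `S`. -/
def CollidersIn (S : Set V) : {a b : V} → G.Walk a b → Prop
  | _, _, .nil _ => True
  | _, _, .cons t _ q => collidersInAux S t q

def noncollUnblAux : (u : V) → LinkType → {b c : V} → G.Walk b c → Prop
  | _, _, _, _, .nil _ => True
  | u, t1, v, _, .cons t2 _ q =>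
      (¬ colliderAt t1 t2 → unblockableAt G u v q.first t1 t2) ∧ noncollUnblAux v t2 q

/-- Every interior non-collider on the walk is unblockable. -/
def NoncollidersUnblockable : {a b : V} → G.Walk a b → Prop
  | _, _, .nil _ => True
  | a, _, .cons t _ q => noncollUnblAux a t q

/-- The set of edges occurring on a walk (directed edges as ordered pairs in `E_d`,
bidirected edges as unordered pairs). -/
def edges : {a b : V} → G.Walk a b → Set ((V × V) ⊕ Sym2 V)
  | _, _, .nil _ => ∅
  | a, _, .cons t _ p =>
      insert (match t with
        | .fwd => Sum.inl (a, p.first)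
        | .bwd => Sum.inl (p.first, a)
        | .bi => Sum.inr s(a, p.first)) p.edges

/-- Concatenation of walks. -/
def append : {a b c : V} → G.Walk a b → G.Walk b c → G.Walk a c
  | _, _, _, .nil _, q => q
  | _, _, _, .cons t h p, q => .cons t h (p.append q)

/-- A walk `v_0, …, v_{n+1}` is a path if no node besides the final endpoint occurs more
than once, i.e. `v_0, …, v_n` are pairwise distinct. -/
def IsPath {a b : V} (p : G.Walk a b) : Prop := p.support.dropLast.Nodup

end DMG.Walk

/-- `A` is σ-separated from `B` given `C` in `G`: every walk from a node of `A` to a node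
of `B` is σ-blocked given `C`. -/
def DMG.sigmaSep (G : DMG V) (A B C : Set V) : Prop :=
  ∀ a ∈ A, ∀ b ∈ B, ∀ p : G.Walk a b, ¬ p.sigmaOpen C

/-- The lifted dependency graph of `G`, on two copies of `V`
(`Sum.inl` is the past copy `V_0`, `Sum.inr` the future copy `V_1`). -/
def DMG.lift (G : DMG V) : DMG (V ⊕ V) where
  Ed := {e | ∃ u v, (u, v) ∈ G.Ed ∧
        (e = (Sum.inl u, Sum.inl v) ∨ e = (Sum.inl u, Sum.inr v) ∨
         e = (Sum.inr u, Sum.inr v))}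
  Ebi := {e | ∃ u v, s(u, v) ∈ G.Ebi ∧
        (e = s(Sum.inl u, Sum.inl v) ∨ e = s(Sum.inl u, Sum.inr v) ∨
         e = s(Sum.inr u, Sum.inl v) ∨ e = s(Sum.inr u, Sum.inr v))}

/-- `B` is E-separated from `A` given `C` in `G`:
`A_0` is σ-separated from `B_1` given `C_0 ∪ (C_1 \ B_1)` in the lifted dependency graph. -/
def DMG.ESep (G : DMG V) (A B C : Set V) : Prop :=
  G.lift.sigmaSep (Sum.inl '' A) (Sum.inr '' B)
    ((Sum.inl '' C) ∪ ((Sum.inr '' C) \ (Sum.inr '' B)))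

/-- The independence model `I_E^G` of E-separation triples. -/
def DMG.IE (G : DMG V) : Set (Set V × Set V × Set V) :=
  {t | G.ESep t.1 t.2.1 t.2.2}


/-- The latent projection of `G` onto the observed nodes `O`: a directed edge when there is
a non-trivial directed walk whose interior nodes are all latent, and a bidirected edge when
there is a non-trivial collider-free walk with arrowheads at both endpoints whose interior
nodes are all latent. -/
def DMG.latentProj (G : DMG V) (O : Set V) : DMG O where
  Ed := {e | ∃ p : G.Walk e.1.val e.2.val,
          p.IsDirected ∧ 0 < p.length ∧ ∀ x ∈ p.interior, x ∉ O}
  Ebi := {e | ∃ u v : O, e = s(u, v) ∧ ∃ p : G.Walk u.val v.val,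
          p.headAtStart ∧ p.headAtEnd ∧ p.NoColliders ∧ 0 < p.length ∧
          ∀ x ∈ p.interior, x ∉ O}

/-- The last edge of the walk `p` before entering `scc_G(w)` has an arrowhead at its
endpoint in `scc_G(w)` (vacuous if the walk never leaves `scc_G(w)`). -/
def DMG.lastEdgeInto (G : DMG V) {a b : V} (w : V) (p : G.Walk a b) : Prop :=
  (∀ x ∈ p.support, x ∈ G.scc w) ∨
  ∃ (x y : V) (t : LinkType) (h : G.linkOK x y t) (p₁ : G.Walk a x) (p₂ : G.Walk y b),
    p = p₁.append (.cons t h p₂) ∧ x ∉ G.scc w ∧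
    (∀ z ∈ p₂.support, z ∈ G.scc w) ∧ t.headR

/-- An (asymmetric) inducing path from `v` to `w`: a non-trivial path such that every
collider on it is an ancestor of `v` or `w`, every interior non-collider is unblockable,
and the last edge before entering `scc_G(w)` points into `scc_G(w)`. -/
def DMG.IsInducingPath (G : DMG V) {v w : V} (p : G.Walk v w) : Prop :=
  0 < p.length ∧ p.IsPath ∧
  p.CollidersIn (G.anc {v, w}) ∧ p.NoncollidersUnblockable ∧ G.lastEdgeInto w p

theorem anc_mono' (H : DMG V) {D D' : Set V} (h : D ⊆ D') : H.anc D ⊆ H.anc D' :=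
  fun _ ⟨v, hv, hu⟩ => ⟨v, h hv, hu⟩

theorem directed_open (H : DMG V) (D : Set V) {v x : V} (h : H.ancestor v x) :
    v ∉ H.anc D → ∃ q : H.Walk v x, ∀ u t, q.sigmaOpenAux D u t := by
  unfold DMG.ancestor at h
  induction h using Relation.ReflTransGen.head_induction_on with
  | refl => exact fun _ => ⟨.nil _, fun _ _ => trivial⟩
  | @head a c hac hcx ih =>
    intro ha
    obtain ⟨q, hq⟩ := ih (fun ⟨d, hd, hcd⟩ => ha ⟨d, hd, Relation.ReflTransGen.head hac hcd⟩)
    refine ⟨.cons .fwd hac q, fun u t => ⟨⟨fun hc => hc.2.elim, fun _ _ hD => ?_⟩, hq _ _⟩⟩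
    exact ha ⟨a, hD, Relation.ReflTransGen.refl⟩

theorem cut_open (H : DMG V) (X S : Set V) {b c : V} (p : H.Walk b c) (hc : c ∈ S) :
    ∀ u t, p.sigmaOpenAux (X \ S) u t →
      ∃ s ∈ S, ∃ q : H.Walk b s, q.sigmaOpenAux (X \ {s}) u t := by
  induction p with
  | nil v => exact fun u t _ => ⟨v, hc, .nil v, trivial⟩
  | @cons v w c t2 h p ih =>
    rintro u t ⟨⟨h1, h2⟩, h3⟩
    by_cases hv : v ∈ S
    · exact ⟨v, hv, .nil v, trivial⟩
    · obtain ⟨s, hs, q, hq⟩ := ih hc _ _ h3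
      refine ⟨s, hs, .cons t2 h q, ⟨fun hcol => ?_, fun hn hu hX => ?_⟩, hq⟩
      · refine anc_mono' H ?_ (h1 hcol)
        rintro x ⟨hx, hxS⟩
        exact ⟨hx, fun e => hxS (e ▸ hs)⟩
      · exact h2 hn hu ⟨hX.1, hv⟩

theorem ext_open (H : DMG V) (X S : Set V) {b c : V} (p : H.Walk b c) (hc : c ∈ S) :
    ∀ u t, p.sigmaOpenAux (X \ {c}) u t →
      ∃ s ∈ S, ∃ q : H.Walk b s, q.sigmaOpenAux (X \ S) u t := by
  induction p with
  | nil v => exact fun u t _ => ⟨v, hc, .nil v, trivial⟩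
  | @cons v w c t2 h p ih =>
    rintro u t ⟨⟨h1, h2⟩, h3⟩
    by_cases hv : colliderAt t t2 ∧ v ∉ H.anc (X \ S)
    · obtain ⟨x, hx, hvx⟩ := h1 hv.1
      obtain ⟨q, hq⟩ := directed_open H _ hvx hv.2
      refine ⟨x, ?_, q, hq _ _⟩
      by_contra hxS
      exact hv.2 ⟨x, ⟨hx.1, hxS⟩, hvx⟩
    · obtain ⟨s, hs, q, hq⟩ := ih hc _ _ h3
      refine ⟨s, hs, .cons t2 h q, ⟨fun hcol => ?_, fun hn hu hX => ?_⟩, hq⟩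
      · by_contra hva
        exact hv ⟨hcol, hva⟩
      · exact h2 hn hu ⟨hX.1, fun e => hX.2 (e ▸ hc)⟩

theorem cond_eq (B C : Set V) :
    ((Sum.inl '' C) ∪ ((Sum.inr '' C) \ (Sum.inr '' B)) : Set (V ⊕ V)) =
      ((Sum.inl '' C) ∪ (Sum.inr '' C)) \ (Sum.inr '' B) := by
  ext x
  rcases x with x | x <;> simp

/-- Right composition (RCo) for E-separation. -/
theorem right_composition {V : Type} [Fintype V] (G : DMG V) (hG : G.Ebi = ∅)
    (A B C : Set V) :
    (A, B, C) ∈ G.IE ↔ ∀ b ∈ B, (A, ({b} : Set V), C) ∈ G.IE := by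
  show G.ESep A B C ↔ ∀ b ∈ B, G.ESep A {b} C
  unfold DMG.ESep
  simp only [cond_eq]
  simp only [Set.image_singleton]
  constructor
  · rintro hB b hb _ ⟨a, ha, rfl⟩ _ rfl p hp
    cases p with
    | cons t h p =>
      obtain ⟨s, hs, q, hq⟩ := ext_open _ _ (Sum.inr '' B) p ⟨b, hb, rfl⟩ _ _ hp
      exact hB _ ⟨a, ha, rfl⟩ s hs (.cons t h q) hq
  · rintro hB _ ⟨a, ha, rfl⟩ _ ⟨b, hb, rfl⟩ p hp
    cases p with
    | cons t h p =>
      obtain ⟨_, ⟨s, hs, rfl⟩, q, hq⟩ := cut_open _ _ (Sum.inr '' B) p ⟨b, hb, rfl⟩ _ _ hp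
      exact hB s hs _ ⟨a, ha, rfl⟩ _ rfl (.cons t h q) hq

end ESepPaper
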